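/- Let (R,m) be a complete Noetherian local integral domain of Krull dimension d containing a field of characteristic p > 0, and let x_1,…,x_d be a system of parameters. Then the tight closure and the plus closure of the parameter ideal coincide: (x_1,…,x_d)^* = (x_1,…,x_d)^+. -/

import Mathlib

/-!
Plus closure lies in tight closure for any ideal `I` of a Noetherian domain: if `f ∈ IS` with `S`
finite over `R`, an `R`-linear map `θ : S → R` with `c = θ 1 ≠ 0` gives `c * f ^ q ∈ I^[q]`
(`plusClosure_subset_tightClosure`).

For the converse, Cohen's structure theorem (`exists_finite_injective_hom`) presents `R` as a
finite extension of `A = k⟦X_1, …, X_d⟧` with `X_i` mapping to `x_i`. The coefficient field comes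
from formal smoothness of `k` over the prime field, finiteness from completeness of `A`, and
injectivity from a comparison of dimensions.

Let `c * f ^ q ∈ (x_i ^ q)` for all `q`, and let `N ⊆ Hom_A(R, A)` consist of the `ψ` with
`ψ (r * f ^ q) ∈ (X_i ^ q)` for all `q` and `r` (`tightHoms`). It is generated by finitely many
`ψ_l`, contains `φ ∘ c` for all `φ`, and is stable under `ψ ↦ (r ↦ l (ψ (r ^ p)))` for every
`p⁻¹`-linear `l : A → A`. Hence, for an algebraically closed field `L` containing `R`, the
embedding `R → L` has the form `∑ ψ_l s_l` with `s_l ∈ L`. Since `A` has enough `p⁻¹`-linear maps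
(`hasCartierMaps_mvPowerSeries`), stability yields a matrix `C` over `A` with
`ψ_l (z ^ p) = ∑ C_ll' (ψ_l' z) ^ p`. Raising `z = ∑ ψ_l(z) s_l` to the `p`-th power shows that
`s_l' ^ p - ∑ C_ll' s_l` is a syzygy of the `ψ_l ^ p`. It is removed by changing `s` by a syzygy of
the `ψ_l`, which amounts to a system `γ ^ p = E γ + β` over `L`, always solvable
(`exists_solution_frobenius_system`). Now `s_l' ^ p = ∑ C_ll' s_l`, so the `s_l` are integral, and
in the finite extension `S = R[s_l]` one has `f = ∑ ψ_l(f) s_l ∈ (x_1, …, x_d) S`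
(`mem_plusClosure_of_hasCartierMaps`).
-/

/-- The Frobenius power `I^[q]` of an ideal. -/
def bracketPow {R : Type} [CommRing R] (I : Ideal R) (q : ℕ) : Ideal R :=
  Ideal.span ((fun a => a ^ q) '' (I : Set R))

/-- The tight closure of an ideal `I` in characteristic `p`. -/
def tightClosure {R : Type} [CommRing R] (p : ℕ) (I : Ideal R) : Set R :=
  {f | ∃ c : R, c ≠ 0 ∧ ∃ e₀ : ℕ, ∀ e ≥ e₀, c * f ^ p ^ e ∈ bracketPow I (p ^ e)}

/-- The plus closure of an ideal `I`: all `f` contained in `IS` for some module-finite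
extension of integral domains `R ⊆ S`. -/
def plusClosure (R : Type) [CommRing R] (I : Ideal R) : Set R :=
  {f | ∃ (S : Type) (_ : CommRing S) (_ : IsDomain S) (φ : R →+* S),
    Function.Injective φ ∧ φ.Finite ∧ φ f ∈ I.map φ}

/-! ### Plus closure lies in tight closure; an integrality criterion -/

/-- A field containing `A` is flat over `A`, being a vector space over the localization `Frac A`. -/
theorem flat_of_injective_to_field (A L : Type) [CommRing A] [IsDomain A] [Field L] [Algebra A L]
    (h : Function.Injective (algebraMap A L)) : Module.Flat A L := by
  have : FaithfulSMul A L := (faithfulSMul_iff_algebraMap_injective A L).2 h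
  let := FractionRing.liftAlgebra A L
  have : IsScalarTower A (FractionRing A) L := FractionRing.isScalarTower_liftAlgebra A L
  have : Module.Flat A (FractionRing A) := IsLocalization.flat _ (nonZeroDivisors A)
  exact Module.Flat.trans A (FractionRing A) L

/-- A linear map from a finite module to a flat module factors through a finite free module, so it
is a finite combination of linear functionals `φ i` with coefficients `y i` in the target. -/
theorem exists_factor_flat {A M L : Type} [CommRing A] [IsNoetherianRing A] [AddCommGroup M]
    [Module A M] [Module.Finite A M] [AddCommGroup L] [Module A L] [Module.Flat A L]
    (j : M →ₗ[A] L) :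
    ∃ (k : ℕ) (φ : Fin k → (M →ₗ[A] A)) (y : Fin k → L), ∀ r, j r = ∑ i, φ i r • y i := by
  have : Module.FinitePresentation A M := Module.finitePresentation_of_finite A M
  obtain ⟨k, h₂, h₃, h⟩ := Module.Flat.exists_factorization_of_finitePresentation j
  refine ⟨k, fun i => (Finsupp.lapply i) ∘ₗ h₂, fun i => h₃ (Finsupp.single i 1), fun r => ?_⟩
  rw [h]
  simp only [LinearMap.comp_apply, Finsupp.lapply_apply, ← map_smul, ← map_sum]
  congr 1
  ext a
  simp

theorem pow_mem_map_bracketPow {R S : Type} [CommRing R] [CommRing S] (p : ℕ) [Fact p.Prime]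
    [CharP S p] (φ : R →+* S) (I : Ideal R) (e : ℕ) {g : S} (hg : g ∈ I.map φ) :
    g ^ p ^ e ∈ (bracketPow I (p ^ e)).map φ := by
  have : ExpChar S p := ExpChar.prime Fact.out
  refine Submodule.span_induction (p := fun g _ => g ^ p ^ e ∈ (bracketPow I (p ^ e)).map φ)
    ?_ ?_ ?_ ?_ hg
  · rintro _ ⟨a, ha, rfl⟩
    rw [← map_pow]
    exact Ideal.mem_map_of_mem _ (Ideal.subset_span ⟨a, ha, rfl⟩)
  · rw [zero_pow (pow_pos (Fact.out : p.Prime).pos e).ne']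
    exact zero_mem _
  · intro a b _ _ ha hb
    rw [add_pow_expChar_pow]
    exact add_mem ha hb
  · intro a b _ hb
    rw [smul_eq_mul, mul_pow]
    exact Ideal.mul_mem_left _ _ hb

/-- If `f ∈ IS`, then a linear map `θ : S → R` with `c = θ 1 ≠ 0` sends `f ^ q ∈ I^[q] S` to
`c * f ^ q ∈ I^[q]`. Such a `θ` exists because `S → Frac S` is a combination of functionals. -/
theorem plusClosure_subset_tightClosure (R : Type) [CommRing R] [IsNoetherianRing R] [IsDomain R]
    (p : ℕ) [Fact p.Prime] [CharP R p] (I : Ideal R) :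
    plusClosure R I ⊆ tightClosure p I := by
  rintro f ⟨S, _, _, φ, hinj, hfin, hf⟩
  let := φ.toAlgebra
  have : Module.Finite R S := hfin
  have : CharP S p := charP_of_injective_ringHom hinj p
  have hL : Function.Injective (algebraMap R (FractionRing S)) := by
    rw [IsScalarTower.algebraMap_eq R S (FractionRing S)]
    exact (IsFractionRing.injective S (FractionRing S)).comp hinj
  have := flat_of_injective_to_field R (FractionRing S) hL
  obtain ⟨k, θ, y, h⟩ := exists_factor_flat
    ((IsScalarTower.toAlgHom R S (FractionRing S)).toLinearMap)
  have : ∃ i, θ i 1 ≠ 0 := by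
    by_contra! hc
    have := h 1
    simp [hc] at this
  obtain ⟨i, hi⟩ := this
  refine ⟨θ i 1, hi, 0, fun e _ => ?_⟩
  have key : ∀ s ∈ (bracketPow I (p ^ e)).map φ, θ i s ∈ bracketPow I (p ^ e) := by
    intro s hs
    refine Submodule.span_induction (p := fun s _ => ∀ t : S, θ i (t * s) ∈ bracketPow I (p ^ e))
      ?_ ?_ ?_ ?_ hs 1 |> (by simpa using ·)
    · rintro _ ⟨a, ha, rfl⟩ t
      have : t * φ a = a • t := by rw [Algebra.smul_def, mul_comm]; rfl
      rw [this, map_smul, smul_eq_mul]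
      exact Ideal.mul_mem_right _ _ ha
    · simp
    · intro a b _ _ ha hb t
      rw [mul_add, map_add]
      exact add_mem (ha t) (hb t)
    · intro a b _ hb t
      rw [smul_eq_mul, ← mul_assoc]
      exact hb _
  have h1 := key _ (pow_mem_map_bracketPow p φ I e hf)
  have h2 : φ f ^ p ^ e = (f ^ p ^ e) • (1 : S) := by
    rw [Algebra.smul_def, mul_one, map_pow]; rfl
  rw [h2, map_smul, smul_eq_mul, mul_comm] at h1
  exact h1

/-- If the `p`-th powers of a finite family lie in its `A`-span `V`, then its members are integral:
all `s i ^ p ^ j` lie in the Noetherian module `V`, so the chain of submodules spanned by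
`s i ^ p ^ j`, `j < e`, is stationary, and this yields a monic equation for `s i`. -/
theorem isIntegral_of_pow_mem_span {A L : Type} [CommRing A] [IsNoetherianRing A] [CommRing L]
    [Algebra A L] (p : ℕ) [Fact p.Prime] [CharP L p] {m : ℕ} (s : Fin m → L)
    (h : ∀ i, s i ^ p ∈ Submodule.span A (Set.range s)) (i : Fin m) : IsIntegral A (s i) := by
  have : ExpChar L p := ExpChar.prime Fact.out
  set V := Submodule.span A (Set.range s) with hV
  have hp1 : 1 < p := (Fact.out : p.Prime).one_lt
  have hstab : ∀ v ∈ V, v ^ p ∈ V := by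
    intro v hv
    refine Submodule.span_induction (p := fun v _ => v ^ p ∈ V) ?_ ?_ ?_ ?_ hv
    · rintro _ ⟨i, rfl⟩
      exact h i
    · rw [zero_pow (by omega)]; exact zero_mem _
    · intro a b _ _ ha hb
      rw [add_pow_expChar]
      exact add_mem ha hb
    · intro a b _ hb
      rw [smul_pow]
      exact V.smul_mem _ hb
  have hpow : ∀ e, s i ^ p ^ e ∈ V := by
    intro e
    induction e with
    | zero => simpa using Submodule.subset_span (Set.mem_range_self i)
    | succ e ih => rw [pow_succ, pow_mul]; exact hstab _ ih
  have : Module.Finite A V := Module.Finite.span_of_finite A (Set.finite_range s)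
  have : IsNoetherian A V := isNoetherian_of_isNoetherianRing_of_finite A V
  let W : ℕ →o Submodule A V :=
    ⟨fun e => Submodule.span A ((fun j => (⟨s i ^ p ^ j, hpow j⟩ : V)) '' Set.Iio e),
      fun a b hab => Submodule.span_mono (Set.image_mono (Set.Iio_subset_Iio hab))⟩
  obtain ⟨n, hn⟩ := monotone_stabilizes_iff_noetherian.2 ‹IsNoetherian A V› W
  have hmem : (⟨s i ^ p ^ n, hpow n⟩ : V) ∈ W n := by
    rw [hn (n + 1) (by omega)]
    exact Submodule.subset_span ⟨n, by simp, rfl⟩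
  have hmem2 : s i ^ p ^ n ∈ Submodule.span A ((fun j => s i ^ p ^ j) '' (Finset.range n : Set ℕ)) := by
    have h1 : V.subtype ⟨s i ^ p ^ n, hpow n⟩ ∈ (W n).map V.subtype :=
      Submodule.mem_map_of_mem hmem
    have h2 : (W n).map V.subtype =
        Submodule.span A ((fun j => s i ^ p ^ j) '' (Finset.range n : Set ℕ)) := by
      change Submodule.map V.subtype (Submodule.span A _) = _
      rw [Submodule.map_span, ← Set.image_comp, Finset.coe_range]
      rfl
    rwa [h2] at h1
  obtain ⟨a, ha⟩ := (Submodule.mem_span_image_finset_iff_exists_fun' A).1 hmem2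
  refine ⟨Polynomial.X ^ p ^ n - ∑ j ∈ Finset.range n, Polynomial.C (a j) * Polynomial.X ^ p ^ j,
    ?_, ?_⟩
  · apply Polynomial.monic_X_pow_sub
    refine lt_of_le_of_lt (Polynomial.degree_sum_le _ _) ?_
    rw [Finset.sup_lt_iff (WithBot.bot_lt_coe _)]
    intro j hj
    refine lt_of_le_of_lt (Polynomial.degree_C_mul_X_pow_le _ _) ?_
    exact_mod_cast Nat.pow_lt_pow_right hp1 (Finset.mem_range.1 hj)
  · simp only [Polynomial.eval₂_sub, Polynomial.eval₂_X_pow, Polynomial.eval₂_finsetSum,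
      Polynomial.eval₂_mul, Polynomial.eval₂_C]
    rw [← ha, sub_eq_zero]
    exact Finset.sum_congr rfl fun j _ => by rw [Algebra.smul_def]

/-! ### Frobenius-linear systems over an algebraically closed field -/

theorem ringKrullDim_le_of_isIntegral {A B : Type} [CommRing A] [CommRing B] [Algebra A B]
    [Algebra.IsIntegral A B] : ringKrullDim B ≤ ringKrullDim A := by
  refine Order.krullDim_le_of_strictMono (PrimeSpectrum.comap (algebraMap A B)) ?_
  intro P Q h
  obtain ⟨x, hxQ, hxP⟩ := SetLike.exists_of_lt (show P.asIdeal < Q.asIdeal from h)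
  exact Ideal.comap_lt_comap_of_integral_mem_sdiff (le_of_lt h) ⟨hxQ, hxP⟩
    (Algebra.IsIntegral.isIntegral x)

/-- An integral algebra over a domain, of dimension at least that of the domain, is a faithful one:
a nonzero kernel would make the dimension drop. -/
theorem algebraMap_injective_of_ringKrullDim {A B : Type} [CommRing A] [IsDomain A] [CommRing B]
    [Algebra A B] [Algebra.IsIntegral A B] {n : ℕ} (hA : ringKrullDim A ≤ n)
    (hB : n ≤ ringKrullDim B) : Function.Injective (algebraMap A B) := by
  rw [injective_iff_map_eq_zero]
  intro a ha
  by_contra hne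
  let K := RingHom.ker (algebraMap A B)
  let _ : Algebra (A ⧸ K) B := (RingHom.kerLift (algebraMap A B)).toAlgebra
  have : IsScalarTower A (A ⧸ K) B := IsScalarTower.of_algebraMap_eq fun _ => rfl
  have : Algebra.IsIntegral (A ⧸ K) B := Algebra.IsIntegral.tower_top A
  have h1 : ringKrullDim B ≤ ringKrullDim (A ⧸ K) := ringKrullDim_le_of_isIntegral
  have h2 := ringKrullDim_succ_le_of_surjective (Ideal.Quotient.mk K)
    Ideal.Quotient.mk_surjective (mem_nonZeroDivisors_of_ne_zero hne)
    (Ideal.Quotient.eq_zero_iff_mem.2 (show a ∈ K from ha))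
  have h3 : ((n : ℕ) : WithBot ℕ∞) + 1 ≤ n := (add_le_add_left (hB.trans h1) 1).trans (h2.trans hA)
  have h4 : n + 1 ≤ n := by exact_mod_cast h3
  omega

open MvPolynomial in
/-- The system `γ ^ p = E γ + β` is solvable over an algebraically closed field of characteristic
`p`. The self-map `γ ↦ γ ^ p - E γ` of affine space is finite by `isIntegral_of_pow_mem_span`,
hence dominant by dimension, hence surjective on closed points by lying over and the
Nullstellensatz. -/
theorem exists_solution_frobenius_system {L : Type} [Field L] [IsAlgClosed L] (p : ℕ) [Fact p.Prime]
    [CharP L p] {g : ℕ} (E : Fin g → Fin g → L) (β : Fin g → L) :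
    ∃ γ : Fin g → L, ∀ i, γ i ^ p = ∑ j, E i j * γ j + β i := by
  let P := MvPolynomial (Fin g) L
  -- The `ULift` index type makes the two copies of the polynomial ring different types, so that
  -- the algebra structure given by `φ` does not clash with `Algebra.id`.
  let A := MvPolynomial (ULift.{0} (Fin g)) L
  let Θ : Fin g → P := fun i => X i ^ p - ∑ j, C (E i j) * X j
  let φ : A →ₐ[L] P := aeval (fun i => Θ i.down)
  have hφX : ∀ i, φ (X (ULift.up i) : A) = Θ i := fun i => aeval_X _ _
  have hφC : ∀ a, φ (C a : A) = (C a : P) := fun a => aeval_C _ _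
  let _ : Algebra A P := φ.toRingHom.toAlgebra
  have hsm : ∀ (a : A) (b : P), a • b = φ a * b := fun a b => rfl
  have hdim : ringKrullDim (MvPolynomial (Fin g) L) = g := by
    rw [MvPolynomial.ringKrullDim_of_isNoetherianRing]; simp
  have hdimA : ringKrullDim (MvPolynomial (ULift.{0} (Fin g)) L) = g := by
    rw [MvPolynomial.ringKrullDim_of_isNoetherianRing]; simp
  have : CharP P p := inferInstanceAs (CharP (MvPolynomial (Fin g) L) p)
  let s : Fin (g + 1) → P := Fin.cons 1 X
  have h1mem : (1 : P) ∈ Submodule.span A (Set.range s) := Submodule.subset_span ⟨0, rfl⟩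
  have hXmem : ∀ i, (X i : P) ∈ Submodule.span A (Set.range s) :=
    fun i => Submodule.subset_span ⟨i.succ, by simp [s]⟩
  have hs : ∀ i, s i ^ p ∈ Submodule.span A (Set.range s) := by
    intro i
    refine Fin.cases ?_ (fun i => ?_) i
    · simpa [s] using h1mem
    · have : (s i.succ) ^ p = (X (ULift.up i) : A) • (1 : P) + ∑ j, (C (E i j) : A) • (X j : P) := by
        simp only [hsm, hφX, hφC]
        simp [s, Θ]
      rw [this]
      exact add_mem (Submodule.smul_mem _ _ h1mem)
        (sum_mem fun j _ => Submodule.smul_mem _ _ (hXmem j))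
  have hintegral : ∀ i, IsIntegral A (X i : P) := fun i => by
    have := isIntegral_of_pow_mem_span (A := A) (L := P) p s hs i.succ
    simpa [s] using this
  have : Algebra.IsIntegral A P := by
    refine ⟨fun f => ?_⟩
    induction f using MvPolynomial.induction_on with
    | C a =>
      have : (C a : P) = algebraMap A P (C a) := by
        change _ = φ (C a)
        rw [hφC]
      rw [this]
      exact isIntegral_algebraMap
    | add f g hf hg => exact hf.add hg
    | mul_X f i hf => exact hf.mul (hintegral i)
  have hinj := algebraMap_injective_of_ringKrullDim (A := A) (B := P) hdimA.le hdim.ge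
  let M : Ideal A := RingHom.ker (MvPolynomial.eval (fun i => β i.down))
  have : M.IsMaximal := RingHom.ker_isMaximal_of_surjective _ (fun a => ⟨C a, eval_C _⟩)
  obtain ⟨Q, hQ, hQM⟩ := Ideal.exists_ideal_over_maximal_of_isIntegral (S := P) M (by
    rw [(RingHom.injective_iff_ker_eq_bot _).1 hinj]; exact bot_le)
  obtain ⟨γ, hγ⟩ := MvPolynomial.isMaximal_iff_eq_vanishingIdeal_singleton.1 hQ
  refine ⟨γ, fun i => ?_⟩
  have h0 : MvPolynomial.eval (fun j : ULift.{0} (Fin g) => β j.down)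
      (X (ULift.up i) - C (β i)) = 0 := by simp
  have h1 : (X (ULift.up i) - C (β i) : A) ∈ M := h0
  rw [← hQM, Ideal.mem_comap] at h1
  have h2 : algebraMap A P (X (ULift.up i) - C (β i)) = Θ i - C (β i) := by
    change φ _ = _
    rw [map_sub, hφX, hφC]
  rw [h2, hγ, mem_vanishingIdeal_singleton_iff] at h1
  simp only [Θ, map_sub, map_pow, map_sum, map_mul, aeval_X, aeval_C, Algebra.algebraMap_self,
    RingHom.id_apply] at h1
  linear_combination h1

/-! ### Cartier maps and syzygies -/

/-- `A` has enough Cartier maps: there is a set `Λ` of `p⁻¹`-linear additive maps such that a vector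
`w` lies in the span of the Frobenius powers `u i ^ p` (taken entrywise) as soon as every
`l ∈ Λ`, applied entrywise to `w`, gives a vector in the span of the `u i`. -/
def HasCartierMaps (p : ℕ) (A : Type) [CommRing A] : Prop :=
  ∃ Λ : Set (A →+ A), (∀ l ∈ Λ, ∀ a b, l (a ^ p * b) = a * l b) ∧
    ∀ (n m : ℕ) (u : Fin m → Fin n → A) (w : Fin n → A),
      (∀ l ∈ Λ, (fun t => l (w t)) ∈ Submodule.span A (Set.range u)) →
        w ∈ Submodule.span A (Set.range fun i t => u i t ^ p)

/-- If `s ^ p - C s` is a combination, with coefficients `β`, of the Frobenius powers of the vectors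
`b i`, and the span of the `b i` is compatible with `C` through the matrix `e`, then `s` can be
changed by an `L`-combination of the `b i` so that `s ^ p = C s` holds exactly. The coefficients
`γ` of the change solve `γ ^ p = e γ + β`. -/
theorem exists_adjustment {A L : Type} [CommRing A] [Field L] [IsAlgClosed L] [Algebra A L]
    (p : ℕ) [Fact p.Prime] [CharP L p] {m g : ℕ} (c : Fin m → Fin m → A) (b : Fin g → Fin m → A)
    (e : Fin g → Fin g → A) (s : Fin m → L) (β : Fin g → L)
    (h1 : ∀ l', s l' ^ p - ∑ l, algebraMap A L (c l l') * s l =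
      ∑ i, algebraMap A L (b i l') ^ p * β i)
    (h2 : ∀ i l', ∑ l, b i l * c l l' = ∑ i', e i i' * b i' l' ^ p) :
    ∃ γ : Fin g → L, ∀ l', (s l' - ∑ i, algebraMap A L (b i l') * γ i) ^ p =
      ∑ l, algebraMap A L (c l l') * (s l - ∑ i, algebraMap A L (b i l) * γ i) := by
  have : ExpChar L p := ExpChar.prime Fact.out
  obtain ⟨γ, hγ⟩ := exists_solution_frobenius_system p (fun i' i => algebraMap A L (e i i')) β
  refine ⟨γ, fun l' => ?_⟩
  rw [sub_pow_expChar, sum_pow_char p]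
  simp only [mul_pow, hγ, mul_sub, Finset.sum_sub_distrib]
  have h3 : ∑ l, algebraMap A L (c l l') * ∑ i, algebraMap A L (b i l) * γ i =
      ∑ i', algebraMap A L (b i' l') ^ p * ∑ i, algebraMap A L (e i i') * γ i := by
    calc _ = ∑ i, algebraMap A L (∑ l, b i l * c l l') * γ i := by
          simp only [Finset.mul_sum, map_sum, map_mul, Finset.sum_mul]
          rw [Finset.sum_comm]
          exact Finset.sum_congr rfl fun _ _ => Finset.sum_congr rfl fun _ _ => by ring
      _ = _ := by
          simp only [h2, Finset.mul_sum, map_sum, map_mul, map_pow, Finset.sum_mul]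
          rw [Finset.sum_comm]
          exact Finset.sum_congr rfl fun _ _ => Finset.sum_congr rfl fun _ _ => by ring
  rw [h3]
  simp only [mul_add, Finset.sum_add_distrib]
  have h4 := h1 l'
  linear_combination h4

/-- Flatness: if the `b i` generate all `A`-syzygies of the family `v`, then every syzygy of `v` with
entries in a flat `L` is an `L`-combination of the `b i`. -/
theorem exists_coeff_of_relation {A L : Type} [CommRing A] [IsNoetherianRing A] [Field L]
    [Algebra A L] [Module.Flat A L] {ι : Type} {m g : ℕ} (v : ι → Fin m → A) (b : Fin g → Fin m → A)
    (hb : ∀ a : Fin m → A, (∀ i, ∑ l, a l * v i l = 0) → a ∈ Submodule.span A (Set.range b))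
    (t : Fin m → L) (ht : ∀ i, ∑ l, algebraMap A L (v i l) * t l = 0) :
    ∃ β : Fin g → L, ∀ l, t l = ∑ i, algebraMap A L (b i l) * β i := by
  let K : Submodule A (Fin m → A) := Submodule.span A (Set.range v)
  let X : (Fin m → A) →ₗ[A] L := Fintype.linearCombination A t
  have hXK : X ∘ₗ K.subtype = 0 := by
    ext ⟨k, hk⟩
    change X k = 0
    have : K ≤ LinearMap.ker X := by
      refine Submodule.span_le.2 ?_
      rintro _ ⟨i, rfl⟩
      simpa [X, Fintype.linearCombination_apply, Algebra.smul_def] using ht i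
    exact this hk
  obtain ⟨k, a, y, hXy, ha⟩ := Module.Flat.exists_factorization_of_comp_eq_zero_of_free hXK
  let α : Fin k → Fin m → A := fun j l => a (Pi.single l 1) j
  have hα : ∀ j, α j ∈ Submodule.span A (Set.range b) := by
    intro j
    apply hb
    intro i
    have h1 : a (v i) = 0 := by
      have := LinearMap.congr_fun ha ⟨v i, Submodule.subset_span ⟨i, rfl⟩⟩
      simpa using this
    have h2 : v i = ∑ l, v i l • (Pi.single l 1 : Fin m → A) := by
      ext l
      simp [Finset.sum_apply, Pi.single_apply]
    rw [h2, map_sum] at h1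
    have h3 := DFunLike.congr_fun h1 j
    simp only [map_smul, Finsupp.finsetSum_apply, Finsupp.smul_apply, smul_eq_mul,
      Finsupp.zero_apply] at h3
    rw [← h3]
    exact Finset.sum_congr rfl fun l _ => mul_comm _ _
  choose c hc using fun j => (Submodule.mem_span_range_iff_exists_fun A).1 (hα j)
  refine ⟨fun i => ∑ j, algebraMap A L (c j i) * y (Finsupp.single j 1), fun l => ?_⟩
  have h1 : t l = X (Pi.single l 1) := by simp [X]
  have h2 : a (Pi.single l 1) = ∑ j, α j l • Finsupp.single j (1 : A) := by
    ext j
    simp [α]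
  rw [h1, hXy, LinearMap.comp_apply, h2, map_sum]
  simp only [map_smul, Algebra.smul_def, Finset.mul_sum]
  rw [Finset.sum_comm]
  refine Finset.sum_congr rfl fun j _ => ?_
  rw [← hc j]
  simp only [Finset.sum_apply, Pi.smul_apply, smul_eq_mul, map_sum, map_mul, Finset.sum_mul]
  exact Finset.sum_congr rfl fun i _ => by ring

/-! ### From tight closure multipliers to a finite extension -/

/-- The `A`-linear maps `ψ : R → A` with `ψ (r * f ^ q) ∈ (x i ^ q)` for all `q = p ^ e` and all `r`,
that is, those that send `R`-multiples of `f ^ q` into the `q`-th Frobenius power of `(x i)`. -/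
def tightHoms {A R : Type} [CommRing A] [CommRing R] [Algebra A R] (p : ℕ) {d : ℕ} (x : Fin d → A)
    (f : R) : Submodule A (R →ₗ[A] A) where
  carrier := {ψ | ∀ (e : ℕ) (r : R),
    ψ (r * f ^ p ^ e) ∈ Ideal.span (Set.range fun i => x i ^ p ^ e)}
  add_mem' h h' e r := add_mem (h e r) (h' e r)
  zero_mem' _ _ := zero_mem _
  smul_mem' a _ h e r := Ideal.mul_mem_left _ a (h e r)

/-- A tight closure multiplier `c` for `f` moves every functional into `tightHoms`. -/
theorem comp_mul_mem_tightHoms {A R : Type} [CommRing A] [CommRing R] [Algebra A R] {p : ℕ} {d : ℕ}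
    {x : Fin d → A} {f c : R}
    (h : ∀ e, c * f ^ p ^ e ∈ Ideal.span (Set.range fun i => algebraMap A R (x i) ^ p ^ e))
    (φ : R →ₗ[A] A) : φ ∘ₗ LinearMap.mulLeft A c ∈ tightHoms p x f := by
  intro e r
  obtain ⟨s, hs⟩ := Ideal.mem_span_range_iff_exists_fun.1 (h e)
  have h1 : c * (r * f ^ p ^ e) = ∑ i, (x i ^ p ^ e) • (r * s i) := by
    rw [mul_left_comm, ← hs, Finset.mul_sum]
    refine Finset.sum_congr rfl fun i _ => ?_
    rw [Algebra.smul_def, map_pow]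
    ring
  rw [LinearMap.comp_apply, LinearMap.mulLeft_apply, h1, map_sum]
  refine sum_mem fun i _ => ?_
  rw [map_smul, smul_eq_mul]
  exact Ideal.mul_mem_right _ _ (Ideal.subset_span ⟨i, rfl⟩)

/-- The `A`-linear map `r ↦ l (ψ (r ^ p))`, for a `p⁻¹`-linear map `l` of `A`. -/
def cartierTwist {A R : Type} [CommRing A] [CommRing R] [Algebra A R] (p : ℕ) [ExpChar R p]
    (l : A →+ A) (hl : ∀ a b, l (a ^ p * b) = a * l b) (ψ : R →ₗ[A] A) : R →ₗ[A] A where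
  toFun r := l (ψ (r ^ p))
  map_add' r s := by rw [add_pow_expChar, map_add, map_add]
  map_smul' a r := by
    rw [smul_pow, map_smul, smul_eq_mul, hl, RingHom.id_apply, smul_eq_mul]

theorem cartierTwist_mem_tightHoms {A R : Type} [CommRing A] [CommRing R] [Algebra A R] {p : ℕ}
    [ExpChar R p] {d : ℕ} {x : Fin d → A} {f : R} {l : A →+ A}
    (hl : ∀ a b, l (a ^ p * b) = a * l b) {ψ : R →ₗ[A] A} (hψ : ψ ∈ tightHoms p x f) :
    cartierTwist p l hl ψ ∈ tightHoms p x f := by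
  intro e r
  change l (ψ ((r * f ^ p ^ e) ^ p)) ∈ _
  obtain ⟨a, ha⟩ := Ideal.mem_span_range_iff_exists_fun.1 (hψ (e + 1) (r ^ p))
  rw [mul_pow, ← pow_mul, ← pow_succ, ← ha, map_sum]
  refine sum_mem fun i _ => ?_
  rw [pow_succ p e, pow_mul, mul_comm, hl]
  exact Ideal.mul_mem_right _ _ (Ideal.subset_span ⟨i, rfl⟩)

/-- Tight closure multipliers over `A` put `f` in the plus closure, when `A` has enough Cartier maps;
the finite extension is built inside an algebraically closed field `L` containing `R`.

With generators `ψ l` of `tightHoms p x f`, the embedding `R → L` is `∑ l, ψ l * s l`. Here `s` is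
unique up to `L`-combinations of the syzygies of the `ψ l`. Stability under `cartierTwist` gives
`ψ l (z ^ p) = ∑ l', C l l' * ψ l' z ^ p`, so `s ^ p - C s` is a syzygy of the `ψ l ^ p` and
`exists_adjustment` makes it vanish. Then the `s l` are integral and `f = ∑ l, ψ l f * s l` with
`ψ l f ∈ (x i)`. -/
theorem mem_plusClosure_of_hasCartierMaps_aux {A R L : Type} [CommRing A] [IsDomain A]
    [IsNoetherianRing A] [CommRing R] [IsDomain R] [Algebra A R] [Module.Finite A R]
    [Field L] [IsAlgClosed L] [Algebra R L] [Algebra A L] [IsScalarTower A R L]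
    (hRL : Function.Injective (algebraMap R L))
    (hinj : Function.Injective (algebraMap A R)) (p : ℕ) [Fact p.Prime] [CharP R p]
    (hA : HasCartierMaps p A) {d : ℕ} (x : Fin d → A) (f c : R) (hc : c ≠ 0)
    (h : ∀ e, c * f ^ p ^ e ∈ Ideal.span (Set.range fun i => algebraMap A R (x i) ^ p ^ e)) :
    f ∈ plusClosure R (Ideal.span (Set.range fun i => algebraMap A R (x i))) := by
  obtain ⟨Λ, hΛ, hspan⟩ := hA
  have : ExpChar R p := ExpChar.prime Fact.out
  have : CharP A p := RingHom.charP _ hinj p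
  have : ExpChar A p := ExpChar.prime Fact.out
  have hAL : Function.Injective (algebraMap A L) := by
    rw [IsScalarTower.algebraMap_eq A R L]
    exact hRL.comp hinj
  have : CharP L p := charP_of_injective_ringHom hRL p
  have : ExpChar L p := ExpChar.prime Fact.out
  have := flat_of_injective_to_field A L hAL
  -- A functional on `R` is determined by its values on the generators `r t`; this embeds
  -- `Hom_A(R, A)` in a finite free module.
  obtain ⟨n, r, hr⟩ := Module.Finite.exists_fin (R := A) (M := R)
  let ev : (R →ₗ[A] A) →ₗ[A] (Fin n → A) := LinearMap.pi fun t => LinearMap.applyₗ (r t)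
  have hev : Function.Injective ev := by
    intro φ φ' hφ
    refine LinearMap.ext_on_range hr fun t => congrFun hφ t
  have : IsNoetherian A (R →ₗ[A] A) := isNoetherian_of_injective ev hev
  obtain ⟨m, ψ, hψ⟩ := Submodule.fg_iff_exists_fin_generating_family.1
    (IsNoetherian.noetherian (tightHoms p x f))
  have hψmem : ∀ l, ψ l ∈ tightHoms p x f := fun l => hψ ▸ Submodule.subset_span ⟨l, rfl⟩
  -- Write `R → L` as a combination of functionals and divide by `c`: after multiplication by `c`
  -- the functionals lie in the span of the `ψ l`.
  obtain ⟨s, hs⟩ : ∃ s : Fin m → L, ∀ r : R,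
      algebraMap R L r = ∑ l, algebraMap A L (ψ l r) * s l := by
    obtain ⟨k, φ, y, hφ⟩ := exists_factor_flat (IsScalarTower.toAlgHom A R L).toLinearMap
    have hmem : ∀ j, φ j ∘ₗ LinearMap.mulLeft A c ∈ Submodule.span A (Set.range ψ) :=
      fun j => hψ ▸ comp_mul_mem_tightHoms h (φ j)
    choose a ha using fun j => (Submodule.mem_span_range_iff_exists_fun A).1 (hmem j)
    have hcL : algebraMap R L c ≠ 0 := by
      rwa [Ne, map_eq_zero_iff _ hRL]
    refine ⟨fun l => ∑ j, algebraMap A L (a j l) * (y j / algebraMap R L c), fun r => ?_⟩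
    have h1 : ∀ j, φ j (c * r) = ∑ l, a j l * ψ l r := by
      intro j
      have := LinearMap.congr_fun (ha j) r
      simpa [LinearMap.sum_apply] using this.symm
    have h2 : algebraMap R L (c * r) = ∑ j, φ j (c * r) • y j := hφ (c * r)
    have h3 : algebraMap R L r = algebraMap R L (c * r) / algebraMap R L c := by
      rw [map_mul]; field_simp
    rw [h3, h2]
    simp only [h1, Algebra.smul_def, map_sum, map_mul, Finset.sum_div, Finset.mul_sum,
      Finset.sum_mul]
    rw [Finset.sum_comm]
    exact Finset.sum_congr rfl fun _ _ => Finset.sum_congr rfl fun _ _ => by ring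
  -- Every Cartier map carries the vector `ψ l (r t ^ p)` into the span of the family `ψ`, so that
  -- vector lies in the span of their entrywise `p`-th powers.
  obtain ⟨C, hC⟩ : ∃ C : Fin m → Fin m → A, ∀ l (z : R),
      ψ l (z ^ p) = ∑ l', C l l' * ψ l' z ^ p := by
    have hmem : ∀ l, (fun t => ψ l (r t ^ p)) ∈
        Submodule.span A (Set.range fun l' t => ev (ψ l') t ^ p) := by
      intro l
      refine hspan n m (fun l' => ev (ψ l')) _ fun lam hlam => ?_
      have h1 : cartierTwist p lam (hΛ lam hlam) (ψ l) ∈ Submodule.span A (Set.range ψ) :=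
        hψ ▸ cartierTwist_mem_tightHoms _ (hψmem l)
      have h2 := Submodule.mem_map_of_mem (f := ev) h1
      rw [Submodule.map_span, ← Set.range_comp] at h2
      exact h2
    choose C hC using fun l => (Submodule.mem_span_range_iff_exists_fun A).1 (hmem l)
    refine ⟨C, fun l z => ?_⟩
    have hz : z ∈ Submodule.span A (Set.range r) := hr ▸ Submodule.mem_top
    induction hz using Submodule.span_induction with
    | mem z hz =>
      obtain ⟨t, rfl⟩ := hz
      have := congrFun (hC l) t
      simpa [ev] using this.symm
    | zero => simp [(Fact.out : p.Prime).ne_zero]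
    | add z z' _ _ hz hz' =>
      simp only [add_pow_expChar, map_add, hz, hz', mul_add, Finset.sum_add_distrib]
    | smul a z _ hz =>
      simp only [smul_pow, map_smul, hz, smul_eq_mul, mul_pow, Finset.mul_sum]
      exact Finset.sum_congr rfl fun _ _ => by ring
  -- `b` generates the syzygies of the `ψ l`; by the Cartier maps again (`hsyzp`), the entrywise
  -- `p`-th powers of `b` generate the syzygies of the `ψ l ^ p`.
  let syz : (Fin m → A) →ₗ[A] (R →ₗ[A] A) := Fintype.linearCombination A ψ
  obtain ⟨g, b, hb⟩ := Submodule.fg_iff_exists_fin_generating_family.1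
    (IsNoetherian.noetherian (LinearMap.ker syz))
  have hsyz : ∀ (a : Fin m → A), a ∈ LinearMap.ker syz ↔ ∀ z, ∑ l, a l * ψ l z = 0 := by
    intro a
    rw [LinearMap.mem_ker, LinearMap.ext_iff]
    simp [syz, Fintype.linearCombination_apply, LinearMap.sum_apply]
  have hbsyz : ∀ i z, ∑ l, b i l * ψ l z = 0 := fun i =>
    (hsyz (b i)).1 (hb ▸ Submodule.subset_span ⟨i, rfl⟩)
  have hsyzp : ∀ a : Fin m → A, (∀ z : R, ∑ l, a l * ψ l z ^ p = 0) →
      a ∈ Submodule.span A (Set.range fun i l => b i l ^ p) := by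
    intro a ha
    refine hspan m g b a fun lam hlam => ?_
    rw [hb, hsyz]
    intro z
    have := congrArg lam (ha z)
    rw [map_sum, map_zero] at this
    rw [← this]
    refine Finset.sum_congr rfl fun l _ => ?_
    rw [mul_comm (a l), hΛ lam hlam, mul_comm]
  obtain ⟨E, hE⟩ : ∃ E : Fin g → Fin g → A, ∀ i l',
      ∑ l, b i l * C l l' = ∑ i', E i i' * b i' l' ^ p := by
    have hmem : ∀ i, (fun l' => ∑ l, b i l * C l l') ∈
        Submodule.span A (Set.range fun i l => b i l ^ p) := by
      intro i
      apply hsyzp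
      intro z
      rw [← hbsyz i (z ^ p)]
      simp only [hC, Finset.sum_mul, Finset.mul_sum]
      rw [Finset.sum_comm]
      exact Finset.sum_congr rfl fun _ _ => Finset.sum_congr rfl fun _ _ => by ring
    choose E hE using fun i => (Submodule.mem_span_range_iff_exists_fun A).1 (hmem i)
    refine ⟨E, fun i l' => ?_⟩
    have := congrFun (hE i) l'
    simpa using this.symm
  obtain ⟨β, hβ⟩ := exists_coeff_of_relation (fun (z : R) l => ψ l z ^ p)
    (fun i l => b i l ^ p) hsyzp (fun l' => s l' ^ p - ∑ l, algebraMap A L (C l l') * s l) (by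
      intro z
      have h1 : (algebraMap R L z) ^ p = ∑ l, algebraMap A L (ψ l z) ^ p * s l ^ p := by
        rw [hs z, sum_pow_char p]
        simp only [mul_pow]
      have h2 : (algebraMap R L z) ^ p =
          ∑ l', algebraMap A L (ψ l' z ^ p) * ∑ l, algebraMap A L (C l l') * s l := by
        rw [← map_pow, hs]
        simp only [hC, map_sum, map_mul, Finset.sum_mul, Finset.mul_sum]
        rw [Finset.sum_comm]
        exact Finset.sum_congr rfl fun _ _ => Finset.sum_congr rfl fun _ _ => by ring
      simp only [mul_sub, Finset.sum_sub_distrib]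
      rw [← h2, h1]
      simp)
  obtain ⟨γ, hγ⟩ := exists_adjustment p C b E s β (fun l' => by
    rw [hβ l']; simp only [map_pow]) hE
  set s' : Fin m → L := fun l => s l - ∑ i, algebraMap A L (b i l) * γ i with hs'
  have hs'r : ∀ z : R, algebraMap R L z = ∑ l, algebraMap A L (ψ l z) * s' l := by
    intro z
    simp only [hs', mul_sub, Finset.sum_sub_distrib]
    rw [← hs z, eq_comm, sub_eq_self]
    have : ∀ i, algebraMap A L (∑ l, b i l * ψ l z) * γ i = 0 := by
      intro i; rw [hbsyz, map_zero, zero_mul]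
    rw [← Finset.sum_eq_zero fun i (_ : i ∈ Finset.univ) => this i]
    simp only [map_sum, map_mul, Finset.sum_mul, Finset.mul_sum]
    rw [Finset.sum_comm]
    exact Finset.sum_congr rfl fun _ _ => Finset.sum_congr rfl fun _ _ => by ring
  have hintegral : ∀ l, IsIntegral A (s' l) := by
    refine isIntegral_of_pow_mem_span p s' fun l' => ?_
    rw [hγ l']
    refine sum_mem fun l _ => ?_
    rw [← Algebra.smul_def]
    exact Submodule.smul_mem _ _ (Submodule.subset_span ⟨l, rfl⟩)
  let S := Algebra.adjoin R (Set.range s')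
  have hSfin : Module.Finite R S := by
    refine Module.Finite.of_fg (fg_adjoin_of_finite (Set.finite_range s') ?_)
    rintro _ ⟨l, rfl⟩
    exact (hintegral l).tower_top
  refine ⟨S, inferInstance, inferInstance, algebraMap R S, ?_, ?_, ?_⟩
  · refine Function.Injective.of_comp (f := S.val) ?_
    exact hRL
  · exact RingHom.finite_algebraMap.2 hSfin
  · have hmemS : ∀ l, s' l ∈ S := fun l => Algebra.subset_adjoin ⟨l, rfl⟩
    have h1 : algebraMap R S f = ∑ l, algebraMap R S (algebraMap A R (ψ l f)) * ⟨s' l, hmemS l⟩ := by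
      apply Subtype.ext
      change algebraMap R L f = _
      rw [hs'r f, AddSubmonoidClass.coe_finsetSum]
      refine Finset.sum_congr rfl fun l _ => ?_
      rw [IsScalarTower.algebraMap_apply A R L]
      rfl
    rw [h1]
    refine sum_mem fun l _ => Ideal.mul_mem_right _ _ (Ideal.mem_map_of_mem _ ?_)
    -- The defining condition of `tightHoms` at `e = 0`, `r = 1` says `ψ l f ∈ (x i)`.
    have h2 := hψmem l 0 1
    simp only [pow_zero, pow_one, one_mul] at h2
    have h3 := Ideal.mem_map_of_mem (algebraMap A R) h2
    rw [Ideal.map_span, ← Set.range_comp] at h3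
    exact h3

theorem mem_plusClosure_of_hasCartierMaps {A R : Type} [CommRing A] [IsDomain A]
    [IsNoetherianRing A] [CommRing R] [IsDomain R] [Algebra A R] [Module.Finite A R]
    (hinj : Function.Injective (algebraMap A R)) (p : ℕ) [Fact p.Prime] [CharP R p]
    (hA : HasCartierMaps p A) {d : ℕ} (x : Fin d → A) (f c : R) (hc : c ≠ 0)
    (h : ∀ e, c * f ^ p ^ e ∈ Ideal.span (Set.range fun i => algebraMap A R (x i) ^ p ^ e)) :
    f ∈ plusClosure R (Ideal.span (Set.range fun i => algebraMap A R (x i))) := by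
  refine mem_plusClosure_of_hasCartierMaps_aux (L := AlgebraicClosure (FractionRing R))
    ?_ hinj p hA x f c hc h
  rw [IsScalarTower.algebraMap_eq R (FractionRing R) (AlgebraicClosure (FractionRing R))]
  exact (algebraMap (FractionRing R) _).injective.comp (IsFractionRing.injective R _)

/-! ### Cartier maps on power series rings -/

namespace MvPowerSeries

theorem coeff_smul_pow_char {d : ℕ} {k : Type} [Field k] (p : ℕ) [Fact p.Prime] [CharP k p]
    (a : MvPowerSeries (Fin d) k) (ν : Fin d →₀ ℕ) :
    coeff (p • ν) (a ^ p) = coeff ν a ^ p := by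
  have : ExpChar k p := ExpChar.prime Fact.out
  rw [← map_frobenius_expand p (Fact.out : p.Prime).ne_zero, coeff_map, coeff_expand_smul,
    frobenius_def]

theorem coeff_pow_char_of_not_dvd {d : ℕ} {k : Type} [Field k] (p : ℕ) [Fact p.Prime] [CharP k p]
    (a : MvPowerSeries (Fin d) k) {ν : Fin d →₀ ℕ} {i : Fin d} (h : ¬ p ∣ ν i) :
    coeff ν (a ^ p) = 0 := by
  have : ExpChar k p := ExpChar.prime Fact.out
  rw [← map_frobenius_expand p (Fact.out : p.Prime).ne_zero, coeff_map,
    coeff_expand_of_not_dvd _ _ _ h, map_zero]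

/-- A power series without terms of degree less than `N` lies in the `N`-th power of the ideal of
the variables. -/
theorem mem_span_X_pow {d : ℕ} {k : Type} [Field k] (N : ℕ) (f : MvPowerSeries (Fin d) k)
    (hf : ∀ α : Fin d →₀ ℕ, α.degree < N → coeff α f = 0) :
    f ∈ (Ideal.span (Set.range X) : Ideal (MvPowerSeries (Fin d) k)) ^ N := by
  classical
  induction N generalizing f with
  | zero => simp
  | succ N ih =>
    -- `f = ∑ i, X i * F i`, where each monomial of `f` is assigned to the first variable
    -- dividing it.
    let F : Fin d → MvPowerSeries (Fin d) k := fun i β =>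
      if ∀ j < i, β j = 0 then coeff (β + Finsupp.single i 1) f else 0
    have hF : ∀ i β, coeff β (F i) =
        if ∀ j < i, β j = 0 then coeff (β + Finsupp.single i 1) f else 0 := fun _ _ => rfl
    have hsum : f = ∑ i, X i * F i := by
      ext α
      rw [map_sum]
      have hterm : ∀ i, coeff α (X i * F i) =
          if (∀ j < i, α j = 0) ∧ α i ≠ 0 then coeff α f else 0 := by
        intro i
        rw [X, coeff_monomial_mul, one_mul]
        by_cases hi : α i = 0
        · rw [if_neg, if_neg (by simp [hi])]
          intro hle
          have := hle i
          simp [hi] at this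
        · have hle : Finsupp.single i 1 ≤ α := by
            rw [Finsupp.single_le_iff]; omega
          rw [if_pos hle, hF, tsub_add_cancel_of_le hle]
          refine if_congr ?_ rfl rfl
          constructor
          · intro h
            refine ⟨fun j hj => ?_, hi⟩
            have := h j hj
            rwa [Finsupp.tsub_apply, Finsupp.single_eq_of_ne hj.ne, tsub_zero] at this
          · intro h j hj
            rw [Finsupp.tsub_apply, h.1 j hj, zero_tsub]
      simp only [hterm]
      by_cases h0 : α = 0
      · subst h0
        rw [hf 0 (by simp)]
        simp
      · have hne : (Finset.univ.filter fun i => α i ≠ 0).Nonempty := by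
          by_contra hempty
          apply h0
          ext i
          by_contra hi
          exact hempty ⟨i, by simpa using hi⟩
        let i₀ := (Finset.univ.filter fun i => α i ≠ 0).min' hne
        have hi₀ : α i₀ ≠ 0 := by
          have := Finset.min'_mem _ hne
          simpa using this
        have hmin : ∀ j < i₀, α j = 0 := by
          intro j hj
          by_contra hne0
          exact absurd (Finset.min'_le _ j (by simpa using hne0)) (not_le.2 hj)
        rw [Finset.sum_eq_single i₀]
        · rw [if_pos ⟨hmin, hi₀⟩]
        · intro i _ hi
          rw [if_neg]
          rintro ⟨h1, h2⟩
          rcases lt_trichotomy i i₀ with h | h | h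
          · exact h2 (hmin i h)
          · exact hi h
          · exact hi₀ (h1 _ h)
        · simp
    rw [hsum, pow_succ']
    refine sum_mem fun i _ => Ideal.mul_mem_mul (Ideal.subset_span ⟨i, rfl⟩) (ih _ fun α hα => ?_)
    rw [hF]
    split_ifs with h
    · apply hf
      simp only [map_add, Finsupp.degree_single]
      omega
    · rfl

end MvPowerSeries

/-- Finitely many vectors are recovered from finitely many linear functionals. -/
theorem exists_finite_dual_family {F V : Type} [Field F] [AddCommGroup V] [Module F V]
    {T : Set V} (hT : T.Finite) :
    ∃ (r : ℕ) (b : Fin r → V) (l : Fin r → (V →ₗ[F] F)), ∀ z ∈ T, z = ∑ i, l i z • b i := by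
  let W := Submodule.span F T
  have : Module.Finite F W := Module.Finite.span_of_finite F hT
  let B := Module.finBasis F W
  choose l hl using fun i => LinearMap.exists_extend (B.coord i)
  refine ⟨_, fun i => (B i : V), l, fun z hz => ?_⟩
  have hzW : z ∈ W := Submodule.subset_span hz
  have h1 := congrArg Subtype.val (B.sum_repr ⟨z, hzW⟩)
  rw [AddSubmonoidClass.coe_finsetSum] at h1
  refine h1.symm.trans (Finset.sum_congr rfl fun i _ => ?_)
  have h2 := LinearMap.congr_fun (hl i) ⟨z, hzW⟩
  simp only [LinearMap.comp_apply, Submodule.subtype_apply, Module.Basis.coord_apply] at h2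
  rw [h2]
  rfl

/-- Finitely many elements of `k` are recovered from finitely many `p⁻¹`-linear maps: these are the
functionals of `k` over its subfield `k ^ p`, followed by the `p`-th root `k ^ p → k`. -/
theorem exists_finite_frobenius_dual_family {k : Type} [Field k] (p : ℕ) [Fact p.Prime] [CharP k p]
    {T : Set k} (hT : T.Finite) :
    ∃ (r : ℕ) (b : Fin r → k) (l : Fin r → (k →+ k)),
      (∀ i c z, l i (c ^ p * z) = c * l i z) ∧ ∀ z ∈ T, z = ∑ i, l i z ^ p * b i := by
  have : ExpChar k p := ExpChar.prime Fact.out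
  let φ := frobenius k p
  obtain ⟨r, b, l, h⟩ := exists_finite_dual_family (F := φ.fieldRange) hT
  let E := φ.rangeRestrictFieldEquiv
  have hE : ∀ y, (E.symm y) ^ p = (y : k) := fun y =>
    φ.rangeRestrictFieldEquiv_apply_symm_apply y
  refine ⟨r, b, fun i => E.symm.toRingHom.toAddMonoidHom.comp (l i).toAddMonoidHom, ?_, ?_⟩
  · intro i c z
    have h1 : c ^ p * z = E c • z := rfl
    change E.symm (l i (c ^ p * z)) = c * E.symm (l i z)
    rw [h1, map_smul, smul_eq_mul, map_mul, RingEquiv.symm_apply_apply]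
  · intro z hz
    refine (h z hz).trans (Finset.sum_congr rfl fun i _ => ?_)
    change _ = (E.symm (l i z)) ^ p * b i
    rw [hE]
    rfl

/-- The exponent vector `μ`, with entries in `{0, …, p - 1}`, as a finitely supported function. -/
noncomputable def residueExponent {p d : ℕ} (μ : Fin d → Fin p) : Fin d →₀ ℕ :=
  Finsupp.equivFunOnFinite.symm fun i => (μ i : ℕ)

theorem residueExponent_apply {p d : ℕ} (μ : Fin d → Fin p) (i : Fin d) :
    residueExponent μ i = (μ i : ℕ) := rfl

/-- The Cartier map attached to `l : k → k` and the residue vector `μ`: it sends `∑ a_α X ^ α` to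
`∑ l (a_(p ν + μ)) X ^ ν`. -/
noncomputable def cartierMap {k : Type} [Field k] {p d : ℕ} (l : k →+ k) (μ : Fin d → Fin p) :
    MvPowerSeries (Fin d) k →+ MvPowerSeries (Fin d) k where
  toFun a := fun ν => l (MvPowerSeries.coeff (p • ν + residueExponent μ) a)
  map_zero' := by ext; simp; rfl
  map_add' a b := by
    ext ν
    exact (congrArg l (map_add _ a b)).trans (map_add l _ _)

theorem coeff_cartierMap {k : Type} [Field k] {p d : ℕ} (l : k →+ k) (μ : Fin d → Fin p)
    (a : MvPowerSeries (Fin d) k) (ν : Fin d →₀ ℕ) :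
    MvPowerSeries.coeff ν (cartierMap l μ a) =
      l (MvPowerSeries.coeff (p • ν + residueExponent μ) a) := rfl

/-- The Cartier maps are `p⁻¹`-linear. In the coefficient of `a ^ p * b` at `p ν + μ` only the
exponents of `a ^ p` divisible by `p` contribute, and they correspond to the terms of the
coefficient of `a * cartierMap l μ b` at `ν`. -/
theorem cartierMap_pow_mul {k : Type} [Field k] {p d : ℕ} [Fact p.Prime] [CharP k p] (l : k →+ k)
    (hl : ∀ c z, l (c ^ p * z) = c * l z) (μ : Fin d → Fin p) (a b : MvPowerSeries (Fin d) k) :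
    cartierMap l μ (a ^ p * b) = a * cartierMap l μ b := by
  classical
  have hp : 0 < p := (Fact.out : p.Prime).pos
  ext ν
  rw [coeff_cartierMap, MvPowerSeries.coeff_mul, MvPowerSeries.coeff_mul, map_sum]
  symm
  refine Finset.sum_of_injOn (fun q => (p • q.1, p • q.2 + residueExponent μ)) ?_ ?_ ?_ ?_
  · rintro ⟨i, j⟩ - ⟨i', j'⟩ - h
    simp only [Prod.mk.injEq, add_left_inj, nsmul_right_inj hp.ne'] at h
    exact Prod.ext h.1 h.2
  · rintro ⟨i, j⟩ h
    simp only [Finset.mem_coe, Finset.HasAntidiagonal.mem_antidiagonal] at h ⊢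
    rw [← h, smul_add, add_assoc]
  · rintro ⟨i, j⟩ h hnot
    rw [Finset.HasAntidiagonal.mem_antidiagonal] at h
    by_cases hdiv : ∀ t, p ∣ i t
    · exfalso
      apply hnot
      choose i' hi' using hdiv
      have hle : ∀ t, i' t ≤ ν t := by
        intro t
        have h1 := DFunLike.congr_fun h t
        simp only [Finsupp.add_apply, Finsupp.smul_apply, smul_eq_mul, residueExponent_apply] at h1
        have h2 := (μ t).2
        rw [hi' t] at h1
        by_contra hlt
        have h3 : p * (ν t + 1) ≤ p * i' t := Nat.mul_le_mul_left p (by omega)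
        rw [mul_add] at h3
        omega
      refine ⟨(Finsupp.equivFunOnFinite.symm i', ν - Finsupp.equivFunOnFinite.symm i'), ?_, ?_⟩
      · simp only [Finset.mem_coe, Finset.HasAntidiagonal.mem_antidiagonal]
        ext t
        simp only [Finsupp.add_apply, Finsupp.tsub_apply, Finsupp.equivFunOnFinite_symm_apply_apply]
        have := hle t
        omega
      · have h1 : p • Finsupp.equivFunOnFinite.symm i' = i := by
          ext t
          simp [hi' t]
        refine Prod.ext h1 ?_
        apply add_left_cancel (a := i)
        rw [h]
        simp only
        rw [← add_assoc]
        congr 1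
        rw [← h1, ← smul_add]
        congr 1
        ext t
        simp only [Finsupp.add_apply, Finsupp.tsub_apply, Finsupp.equivFunOnFinite_symm_apply_apply]
        have := hle t
        omega
    · push Not at hdiv
      obtain ⟨t, ht⟩ := hdiv
      simp only
      rw [MvPowerSeries.coeff_pow_char_of_not_dvd p a ht, zero_mul, map_zero]
  · rintro ⟨i, j⟩ -
    simp only
    rw [MvPowerSeries.coeff_smul_pow_char, hl, coeff_cartierMap]

theorem coeff_pow_mul_monomial_eq_zero_of_ne {k : Type} [Field k] {p d : ℕ} [Fact p.Prime] [CharP k p]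
    (c : MvPowerSeries (Fin d) k) (b : k) {μ μ₀ : Fin d → Fin p} (h : μ ≠ μ₀) (ν : Fin d →₀ ℕ) :
    MvPowerSeries.coeff (p • ν + residueExponent μ₀)
      (c ^ p * MvPowerSeries.monomial (residueExponent μ) b) = 0 := by
  classical
  rw [MvPowerSeries.coeff_mul_monomial]
  split_ifs with hle
  · obtain ⟨j, hj⟩ := Function.ne_iff.1 h
    have h2 := hle j
    simp only [Finsupp.add_apply, Finsupp.smul_apply, smul_eq_mul, residueExponent_apply] at h2
    rw [MvPowerSeries.coeff_pow_char_of_not_dvd p c (i := j), zero_mul]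
    simp only [Finsupp.tsub_apply, Finsupp.add_apply, Finsupp.smul_apply, smul_eq_mul,
      residueExponent_apply]
    intro hdvd
    apply hj
    have h3 : (μ j : ℕ) ≡ p * ν j + μ₀ j [MOD p] := (Nat.modEq_iff_dvd' h2).2 hdvd
    have h4 : (μ j : ℕ) % p = (μ₀ j : ℕ) % p := by
      rw [h3, Nat.mul_add_mod]
    rw [Nat.mod_eq_of_lt (μ j).2, Nat.mod_eq_of_lt (μ₀ j).2] at h4
    exact Fin.ext h4
  · rfl

/-- A coefficient of `w` that the maps `l i` recover is also a coefficient of the series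
reassembled from the Cartier images of `w`: of the summands, only those with `μ ≡ α mod p`
contribute at `α`. -/
theorem coeff_eq_coeff_sum_cartierMap {k : Type} [Field k] {p d r : ℕ} [Fact p.Prime] [CharP k p]
    (b : Fin r → k) (l : Fin r → (k →+ k)) (w : MvPowerSeries (Fin d) k) (α : Fin d →₀ ℕ)
    (h : MvPowerSeries.coeff α w = ∑ i, l i (MvPowerSeries.coeff α w) ^ p * b i) :
    MvPowerSeries.coeff α w = MvPowerSeries.coeff α (∑ i, ∑ μ : Fin d → Fin p,
      cartierMap (l i) μ w ^ p * MvPowerSeries.monomial (residueExponent μ) (b i)) := by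
  have hp : 0 < p := (Fact.out : p.Prime).pos
  let μ₀ : Fin d → Fin p := fun j => ⟨α j % p, Nat.mod_lt _ hp⟩
  let ν : Fin d →₀ ℕ := Finsupp.equivFunOnFinite.symm fun j => α j / p
  have hα : α = p • ν + residueExponent μ₀ := by
    ext j
    simp only [Finsupp.add_apply, Finsupp.smul_apply, smul_eq_mul, residueExponent_apply, ν, μ₀,
      Finsupp.equivFunOnFinite_symm_apply_apply]
    exact (Nat.div_add_mod _ _).symm
  refine h.trans ?_
  rw [map_sum]
  refine Finset.sum_congr rfl fun i _ => ?_
  rw [map_sum, Finset.sum_eq_single μ₀]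
  · rw [hα, MvPowerSeries.coeff_add_mul_monomial, MvPowerSeries.coeff_smul_pow_char,
      coeff_cartierMap]
  · intro μ _ hμ
    rw [hα]
    exact coeff_pow_mul_monomial_eq_zero_of_ne _ _ hμ _
  · simp

/-- Power series rings over a field of characteristic `p` have enough Cartier maps. If `[k : k ^ p]`
is infinite, `w` is not a finite combination of `p`-th powers of its Cartier images, but modulo
the `N`-th power of the ideal of variables it is, since only finitely many coefficients matter;
Krull's intersection theorem lets `N` tend to infinity. -/
theorem hasCartierMaps_mvPowerSeries (p d : ℕ) (k : Type) [Field k] [Fact p.Prime] [CharP k p] :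
    HasCartierMaps p (MvPowerSeries (Fin d) k) := by
  have hchar : CharP (MvPowerSeries (Fin d) k) p :=
    charP_of_injective_ringHom (f := MvPowerSeries.C) MvPowerSeries.C_injective p
  refine ⟨{L | ∃ (l : k →+ k) (μ : Fin d → Fin p), (∀ c z, l (c ^ p * z) = c * l z) ∧
    L = cartierMap l μ}, ?_, ?_⟩
  · rintro _ ⟨l, μ, hl, rfl⟩ a b
    exact cartierMap_pow_mul l hl μ a b
  · intro n m u w hw
    have : ExpChar (MvPowerSeries (Fin d) k) p := ExpChar.prime Fact.out
    set Q := Submodule.span (MvPowerSeries (Fin d) k) (Set.range fun i t => u i t ^ p) with hQ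
    let J : Ideal (MvPowerSeries (Fin d) k) := Ideal.span (Set.range MvPowerSeries.X)
    have hHaus : IsHausdorff J ((Fin n → MvPowerSeries (Fin d) k) ⧸ Q) :=
      IsHausdorff.of_le_jacobson _ _ (IsAdicComplete.le_jacobson_bot _)
    rw [← Submodule.Quotient.mk_eq_zero]
    refine hHaus.haus _ fun N => ?_
    rw [SModEq.zero]
    have hfin : {α : Fin d →₀ ℕ | α.degree < N}.Finite :=
      Finsupp.finite_of_degree_lt N
    obtain ⟨r, b, l, hl, hT⟩ := exists_finite_frobenius_dual_family (k := k) p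
      (hfin.image2 (fun α t => MvPowerSeries.coeff α (w t)) (Set.finite_univ (α := Fin n)))
    let D : Fin n → MvPowerSeries (Fin d) k := fun t => ∑ i, ∑ μ : Fin d → Fin p,
      cartierMap (l i) μ (w t) ^ p * MvPowerSeries.monomial (residueExponent μ) (b i)
    have hD : D ∈ Q := by
      have hD' : D = ∑ i, ∑ μ : Fin d → Fin p, MvPowerSeries.monomial (residueExponent μ) (b i) •
          (fun t => cartierMap (l i) μ (w t) ^ p) := by
        ext t : 1
        simp only [D, Finset.sum_apply, Pi.smul_apply, smul_eq_mul, mul_comm]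
      rw [hD']
      refine sum_mem fun i _ => sum_mem fun μ _ => Q.smul_mem _ ?_
      obtain ⟨a, ha⟩ := (Submodule.mem_span_range_iff_exists_fun _).1
        (hw _ ⟨l i, μ, hl i, rfl⟩)
      rw [hQ, Submodule.mem_span_range_iff_exists_fun]
      refine ⟨fun j => a j ^ p, ?_⟩
      ext t : 1
      have hat := congrFun ha t
      simp only [Finset.sum_apply, Pi.smul_apply, smul_eq_mul] at hat ⊢
      rw [← hat, sum_pow_char p]
      simp only [mul_pow]
    have hwD : w - D ∈ (J ^ N • ⊤ :
        Submodule (MvPowerSeries (Fin d) k) (Fin n → MvPowerSeries (Fin d) k)) := by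
      rw [← Finset.univ_sum_single (w - D)]
      refine sum_mem fun t _ => ?_
      have ht : (w - D) t ∈ J ^ N := by
        refine MvPowerSeries.mem_span_X_pow N _ fun α hα => ?_
        rw [Pi.sub_apply, map_sub, sub_eq_zero]
        exact coeff_eq_coeff_sum_cartierMap b l (w t) α (hT _ ⟨α, hα, t, trivial, rfl⟩)
      have h1 : Pi.single t ((w - D) t) = (w - D) t •
          (Pi.single t 1 : Fin n → MvPowerSeries (Fin d) k) := by
        rw [← Pi.single_smul, smul_eq_mul, mul_one]
      rw [h1]
      exact Submodule.smul_mem_smul ht trivial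
    have h2 : (Submodule.Quotient.mk w : _ ⧸ Q) = Q.mkQ (w - D) := by
      rw [map_sub, Submodule.mkQ_apply, Submodule.mkQ_apply,
        (Submodule.Quotient.mk_eq_zero Q).2 hD, sub_zero]
    rw [h2]
    have h3 := Submodule.mem_map_of_mem (f := Q.mkQ) hwD
    rw [Submodule.map_smul''] at h3
    exact Submodule.smul_mono le_rfl le_top h3

/-! ### Coefficient fields -/

/-- Let `E` be a subring of `C` that contains all `p`-th powers and on which `π : C → k` is injective.
Then `E` is a field, and `π` stays injective on `E[β]` if `π β ∉ π E`: the minimal polynomial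
of `π β` over `E` is `X ^ p - β ^ p`, which already kills `β`. -/
theorem injOn_adjoin_root {C k : Type} [CommRing C] [Field k] (p : ℕ) [Fact p.Prime]
    [CharP k p] (π : C →+* k) (E : Subring C) (hpow : ∀ c : C, c ^ p ∈ E)
    (hinj : ∀ c ∈ E, π c = 0 → c = 0) (hπ : Function.Surjective π) (β : C)
    (hβ : ∀ e ∈ E, π e ≠ π β) :
    ∀ c ∈ Algebra.adjoin E {β}, π c = 0 → c = 0 := by
  have hp : p.Prime := Fact.out
  have hfield : IsField E := by
    refine ⟨⟨0, 1, fun h => ?_⟩, mul_comm, fun {a} ha => ?_⟩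
    · have h1 : (0 : C) = 1 := congrArg Subtype.val h
      have h2 := congrArg π h1
      simp at h2
    · have ha' : π a ≠ 0 := fun h => ha (Subtype.ext (hinj _ a.2 h))
      obtain ⟨v, hv⟩ := hπ (π a)⁻¹
      refine ⟨⟨(a : C) ^ (p - 1) * v ^ p, E.mul_mem (E.pow_mem a.2 _) (hpow v)⟩, ?_⟩
      apply Subtype.ext
      have h1 : (a : C) * ((a : C) ^ (p - 1) * v ^ p) - 1 = 0 := by
        apply hinj
        · exact E.sub_mem (E.mul_mem a.2 (E.mul_mem (E.pow_mem a.2 _) (hpow v))) E.one_mem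
        · rw [← mul_assoc, ← pow_succ', Nat.sub_add_cancel hp.pos, map_sub, map_mul, map_pow,
            map_pow, hv, ← mul_pow, mul_inv_cancel₀ ha', one_pow, map_one, sub_self]
      exact sub_eq_zero.1 h1
  let _ : Field E := hfield.toField
  let _ : Algebra E k := (π.comp E.subtype).toAlgebra
  let b : E := ⟨β ^ p, hpow β⟩
  have hirr : Irreducible (Polynomial.X ^ p - Polynomial.C b) := by
    refine X_pow_sub_C_irreducible_of_prime hp fun e he => hβ e e.2 ?_
    have h1 : (e : C) ^ p = β ^ p := congrArg Subtype.val he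
    have : ExpChar k p := ExpChar.prime hp
    apply frobenius_inj k p
    rw [frobenius_def, frobenius_def, ← map_pow, ← map_pow, h1]
  have hmin : Polynomial.X ^ p - Polynomial.C b = minpoly E (π β) := by
    refine minpoly.eq_of_irreducible_of_monic hirr ?_ (Polynomial.monic_X_pow_sub_C b hp.ne_zero)
    rw [map_sub, map_pow, Polynomial.aeval_X, Polynomial.aeval_C, sub_eq_zero, ← map_pow]
    rfl
  intro c hc hc0
  rw [Algebra.adjoin_singleton_eq_range_aeval] at hc
  obtain ⟨f, rfl⟩ := hc
  have hf : Polynomial.aeval (π β) f = 0 := by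
    rw [← hc0]
    change Polynomial.eval₂ _ _ f = π (Polynomial.eval₂ _ _ f)
    rw [Polynomial.hom_eval₂]
    rfl
  obtain ⟨g, rfl⟩ := minpoly.dvd E _ hf
  rw [← hmin]
  change Polynomial.aeval β _ = 0
  rw [map_mul, map_sub, map_pow, Polynomial.aeval_X, Polynomial.aeval_C]
  have h1 : algebraMap E C b = β ^ p := rfl
  rw [h1, sub_self, zero_mul]

/-- A surjection in characteristic `p` onto a field, with square-zero kernel elements, has a section:
by Zorn's lemma there is a maximal subring that contains all `p`-th powers and on which `π` is
injective, and by `injOn_adjoin_root` it maps onto `k`. -/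
theorem exists_section_of_sq_zero {C k : Type} [CommRing C] [Field k] (p : ℕ) [Fact p.Prime]
    [CharP C p] [CharP k p] (π : C →+* k) (hπ : Function.Surjective π)
    (hker : ∀ a, π a = 0 → a ^ 2 = 0) : ∃ s : k →+* C, ∀ z, π (s z) = z := by
  have hp : p.Prime := Fact.out
  have : ExpChar C p := ExpChar.prime hp
  let S : Set (Subring C) := {E | (∀ c : C, c ^ p ∈ E) ∧ ∀ c ∈ E, π c = 0 → c = 0}
  have h0 : (frobenius C p).range ∈ S := by
    refine ⟨fun c => ⟨c, rfl⟩, ?_⟩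
    rintro _ ⟨c, rfl⟩ hc
    rw [frobenius_def] at hc ⊢
    rw [map_pow] at hc
    have h1 := hker c (pow_eq_zero_iff hp.ne_zero |>.1 hc)
    rw [← Nat.sub_add_cancel hp.two_le, pow_add, h1, mul_zero]
  obtain ⟨E, -, hE⟩ := zorn_le_nonempty₀ S (fun 𝒞 h𝒞 hchain E₀ hE₀ => by
    have hmem : ∀ {x}, x ∈ sSup 𝒞 ↔ ∃ s ∈ 𝒞, x ∈ s :=
      Subring.mem_sSup_of_directedOn ⟨E₀, hE₀⟩ hchain.directedOn
    refine ⟨sSup 𝒞, ⟨fun c => hmem.2 ⟨E₀, hE₀, (h𝒞 hE₀).1 c⟩, fun c hc => ?_⟩,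
      fun E hE => le_sSup hE⟩
    obtain ⟨E, hE, hcE⟩ := hmem.1 hc
    exact (h𝒞 hE).2 c hcE) _ h0
  have hsurj : ∀ z : k, ∃ e ∈ E, π e = z := by
    intro z
    by_contra hz
    push Not at hz
    obtain ⟨β, rfl⟩ := hπ z
    have hE'S : (Algebra.adjoin E {β}).toSubring ∈ S :=
      ⟨fun c => Subalgebra.algebraMap_mem (Algebra.adjoin E {β}) ⟨c ^ p, hE.prop.1 c⟩,
        injOn_adjoin_root p π E hE.prop.1 hE.prop.2 hπ β hz⟩
    have hle : (Algebra.adjoin E {β}).toSubring ≤ E := hE.le_of_ge hE'S fun e he =>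
      Subalgebra.algebraMap_mem (Algebra.adjoin E {β}) ⟨e, he⟩
    exact hz β (hle (Algebra.subset_adjoin rfl)) rfl
  have hbij : Function.Bijective (π.comp E.subtype) := by
    refine ⟨(injective_iff_map_eq_zero _).2 fun a ha => Subtype.ext (hE.prop.2 a a.2 ha), fun z => ?_⟩
    obtain ⟨e, he, rfl⟩ := hsurj z
    exact ⟨⟨e, he⟩, rfl⟩
  let φ := RingEquiv.ofBijective _ hbij
  exact ⟨E.subtype.comp φ.symm.toRingHom, fun z => φ.apply_symm_apply z⟩

/-- Fields of characteristic `p` are formally smooth over the prime field. A lift of `f : k → B / I`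
with `I ^ 2 = 0` is a section of the projection to `k` of the fibre product of `k` and `B`
over `B / I`. -/
theorem formallySmooth_zmod (p : ℕ) [Fact p.Prime] (k : Type) [Field k] [Algebra (ZMod p) k] :
    Algebra.FormallySmooth (ZMod p) k := by
  have hk : CharP k p := charP_of_injective_algebraMap (algebraMap (ZMod p) k).injective p
  refine Algebra.FormallySmooth.of_comp_surjective fun B _ _ I hI f => ?_
  let C : Subring (k × B) :=
    (f.toRingHom.comp (RingHom.fst k B)).eqLocus ((Ideal.Quotient.mk I).comp (RingHom.snd k B))
  have hC : ∀ c : C, f c.1.1 = Ideal.Quotient.mk I c.1.2 := fun c => c.2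
  have hmem : ∀ a b, f a = Ideal.Quotient.mk I b → (a, b) ∈ C := fun a b h => h
  let π : C →+* k := (RingHom.fst k B).comp C.subtype
  have hπ : Function.Surjective π := fun z => by
    obtain ⟨b, hb⟩ := Ideal.Quotient.mk_surjective (f z)
    exact ⟨⟨(z, b), hmem _ _ hb.symm⟩, rfl⟩
  have hCp : CharP C p := by
    have h1 : ((p : ℕ) : C) = 0 := by
      apply Subtype.ext
      have hB : ((p : ℕ) : B) = 0 := by
        rw [← map_natCast (algebraMap (ZMod p) B), ZMod.natCast_self, map_zero]
      refine Prod.ext ?_ ?_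
      · simp
      · simpa using hB
    have : Nontrivial C := π.domain_nontrivial
    exact (CharP.charP_iff_prime_eq_zero Fact.out).2 h1
  obtain ⟨s, hs⟩ := exists_section_of_sq_zero p π hπ fun a ha => by
    have ha1 : a.1.1 = 0 := ha
    have h2 := hC a
    rw [ha1, map_zero, eq_comm, Ideal.Quotient.eq_zero_iff_mem] at h2
    apply Subtype.ext
    refine Prod.ext ?_ ?_
    · change a.1.1 ^ 2 = 0
      rw [ha1, zero_pow two_ne_zero]
    · change a.1.2 ^ 2 = 0
      have h3 := Ideal.pow_mem_pow h2 2
      rwa [hI] at h3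
  let g : k →+* B := (RingHom.snd k B).comp (C.subtype.comp s)
  have hg : g.comp (algebraMap (ZMod p) k) = algebraMap (ZMod p) B := Subsingleton.elim _ _
  refine ⟨{ g with commutes' := RingHom.congr_fun hg }, ?_⟩
  ext z
  change Ideal.Quotient.mk I (s z).1.2 = f z
  rw [← hC]
  exact congrArg f (hs z)

/-- A complete local ring of characteristic `p` contains a coefficient field. -/
theorem exists_coefficient_field (R : Type) [CommRing R] [IsLocalRing R]
    [IsAdicComplete (IsLocalRing.maximalIdeal R) R] (p : ℕ) [Fact p.Prime] [CharP R p] :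
    ∃ s : IsLocalRing.ResidueField R →+* R, ∀ z, IsLocalRing.residue R (s z) = z := by
  let _ : Algebra (ZMod p) R := ZMod.algebra R p
  have := formallySmooth_zmod p (IsLocalRing.ResidueField R)
  obtain ⟨g, hg⟩ := Algebra.FormallySmooth.exists_mkₐ_comp_eq_of_isAdicComplete
    (I := IsLocalRing.maximalIdeal R) (AlgHom.id (ZMod p) (IsLocalRing.ResidueField R))
  exact ⟨g, fun z => AlgHom.congr_fun hg z⟩

/-! ### Finiteness over a power series ring -/

/-- Evaluation of power series at elements of an ideal `I` of an `I`-adically complete ring. -/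
theorem exists_hom_mvPowerSeries {R k : Type} [CommRing R] [Field k] (I : Ideal R)
    [IsAdicComplete I R] {d : ℕ} (s : k →+* R) (x : Fin d → R) (hx : ∀ i, x i ∈ I) :
    ∃ Φ : MvPowerSeries (Fin d) k →+* R,
      (∀ i, Φ (MvPowerSeries.X i) = x i) ∧ ∀ z, Φ (MvPowerSeries.C z) = s z := by
  let _ : UniformSpace k := ⊥
  have : DiscreteTopology k := ⟨rfl⟩
  let _ : TopologicalSpace R := I.adicTopology
  have hI : IsAdic I := rfl
  have : IsTopologicalRing R := I.ringFilterBasis.isTopologicalRing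
  let _ : UniformSpace R := IsTopologicalAddGroup.rightUniformSpace R
  have : IsUniformAddGroup R := isUniformAddGroup_of_addCommGroup
  obtain ⟨hcomp, hT2⟩ := hI.isAdicComplete_iff.1 inferInstance
  have hlin : IsLinearTopology R R :=
    IsLinearTopology.mk_of_hasBasis' R hI.hasBasis_nhds_zero fun J r m hm => J.mul_mem_left r hm
  have hev : MvPowerSeries.HasEval x := by
    refine ⟨fun i => ?_, ?_⟩
    · rw [IsTopologicallyNilpotent, hI.hasBasis_nhds_zero.tendsto_right_iff]
      intro n _
      filter_upwards [Filter.eventually_ge_atTop n] with m hm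
      exact Ideal.pow_le_pow_right hm (Ideal.pow_mem_pow (hx i) m)
    · rw [Filter.cofinite_eq_bot]
      exact Filter.tendsto_bot
  have hs : Continuous s := continuous_of_discreteTopology
  refine ⟨MvPowerSeries.eval₂Hom hs hev, fun i => ?_, fun z => ?_⟩
  · rw [MvPowerSeries.coe_eval₂Hom, MvPowerSeries.eval₂_X]
  · rw [MvPowerSeries.coe_eval₂Hom, MvPowerSeries.eval₂_C]

theorem mem_smul_top_pi {A : Type} [CommRing A] (I : Ideal A) {n : ℕ} (v : Fin n → A) :
    v ∈ (I • ⊤ : Submodule A (Fin n → A)) ↔ ∀ t, v t ∈ I := by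
  constructor
  · intro h t
    have h1 := Submodule.mem_map_of_mem (f := (LinearMap.proj t : (Fin n → A) →ₗ[A] A)) h
    rw [Submodule.map_smul''] at h1
    have h2 : v t ∈ (I • ⊤ : Submodule A A) := Submodule.smul_mono le_rfl le_top h1
    simpa using h2
  · intro h
    rw [← Finset.univ_sum_single v]
    refine sum_mem fun t _ => ?_
    have h1 : Pi.single t (v t) = v t • (Pi.single t 1 : Fin n → A) := by
      rw [← Pi.single_smul, smul_eq_mul, mul_one]
    rw [h1]
    exact Submodule.smul_mem_smul (h t) trivial

theorem isPrecomplete_pi {A : Type} [CommRing A] (I : Ideal A) [hI : IsPrecomplete I A] (n : ℕ) :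
    IsPrecomplete I (Fin n → A) := by
  refine ⟨fun f hf => ?_⟩
  have h1 : ∀ t, ∃ L : A, ∀ m, f m t ≡ L [SMOD (I ^ m • ⊤ : Submodule A A)] := by
    intro t
    refine hI.prec' (fun m => f m t) fun {m m'} hm => ?_
    have h2 := hf hm
    rw [SModEq.sub_mem] at h2 ⊢
    simpa using (mem_smul_top_pi _ _).1 h2 t
  choose L hL using h1
  refine ⟨L, fun m => ?_⟩
  rw [SModEq.sub_mem, mem_smul_top_pi]
  intro t
  have h2 := hL t m
  rw [SModEq.sub_mem] at h2
  simpa using h2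

/-- Nakayama's lemma for complete rings: generators modulo `J` generate. -/
theorem finite_of_isPrecomplete {A R : Type} [CommRing A] [CommRing R] [Algebra A R] (J : Ideal A)
    [IsPrecomplete J A] [IsHausdorff J R] (S : Submodule A R) (hS : S.FG)
    (h : ∀ r : R, ∃ y ∈ S, r - y ∈ (J • ⊤ : Submodule A R)) : Module.Finite A R := by
  obtain ⟨n, v, hv⟩ := Submodule.fg_iff_exists_fin_generating_family.1 hS
  have := isPrecomplete_pi J n
  refine Module.Finite.of_surjective (Fintype.linearCombination A v)
    (surjective_of_mkQ_comp_surjective (I := J) fun z => ?_)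
  obtain ⟨r, rfl⟩ := Submodule.mkQ_surjective _ z
  obtain ⟨y, hy, hry⟩ := h r
  rw [← hv, ← Fintype.range_linearCombination] at hy
  obtain ⟨a, ha⟩ := hy
  refine ⟨a, ?_⟩
  rw [LinearMap.comp_apply, ha, eq_comm, ← sub_eq_zero, ← map_sub]
  exact (Submodule.Quotient.mk_eq_zero _).2 hry

/-- If `A` maps onto the residue field of `R`, then modulo each power of the maximal ideal `R` is
generated by finitely many elements over `A`. -/
theorem exists_fg_sub_mem_pow {A R : Type} [CommRing A] [CommRing R] [IsLocalRing R]
    [IsNoetherianRing R] [Algebra A R]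
    (h : ∀ r : R, ∃ a : A, r - algebraMap A R a ∈ IsLocalRing.maximalIdeal R) (N : ℕ) :
    ∃ S : Submodule A R, S.FG ∧ ∀ r : R, ∃ y ∈ S, r - y ∈ IsLocalRing.maximalIdeal R ^ N := by
  induction N with
  | zero => exact ⟨⊥, Submodule.fg_bot, fun r => ⟨0, Submodule.zero_mem _, by simp⟩⟩
  | succ N ih =>
    obtain ⟨S, hS, hr⟩ := ih
    obtain ⟨n, v, hv⟩ := Submodule.fg_iff_exists_fin_generating_family.1
      (IsNoetherian.noetherian (IsLocalRing.maximalIdeal R ^ N))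
    refine ⟨S ⊔ Submodule.span A (Set.range v),
      hS.sup (Submodule.fg_span (Set.finite_range v)), fun r => ?_⟩
    obtain ⟨y, hy, hry⟩ := hr r
    rw [← hv] at hry
    obtain ⟨c, hc⟩ := (Submodule.mem_span_range_iff_exists_fun _).1 hry
    choose a ha using fun i => h (c i)
    refine ⟨y + ∑ i, a i • v i, Submodule.add_mem_sup hy
      (sum_mem fun i _ => Submodule.smul_mem _ _ (Submodule.subset_span ⟨i, rfl⟩)), ?_⟩
    have h1 : r - (y + ∑ i, a i • v i) = ∑ i, (c i - algebraMap A R (a i)) * v i := by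
      simp only [sub_mul, Finset.sum_sub_distrib, Algebra.smul_def]
      simp only [smul_eq_mul] at hc
      rw [hc]
      ring
    rw [h1, pow_succ']
    refine sum_mem fun i _ => Ideal.mul_mem_mul (ha i) ?_
    rw [← hv]
    exact Submodule.subset_span ⟨i, rfl⟩

theorem ringKrullDim_mvPowerSeries_le (d : ℕ) (k : Type) [Field k] :
    ringKrullDim (MvPowerSeries (Fin d) k) ≤ d := by
  have hm : IsLocalRing.maximalIdeal (MvPowerSeries (Fin d) k) =
      Ideal.span (Set.range MvPowerSeries.X) := by
    apply le_antisymm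
    · intro f hf
      rw [← pow_one (Ideal.span _)]
      refine MvPowerSeries.mem_span_X_pow 1 f fun α hα => ?_
      have hα0 : α = 0 := by
        rw [← Finsupp.degree_eq_zero_iff]
        omega
      subst hα0
      by_contra hne
      exact hf (MvPowerSeries.isUnit_iff_constantCoeff.2 (IsUnit.mk0 _ hne))
    · rw [Ideal.span_le]
      rintro _ ⟨i, rfl⟩
      intro hu
      have := MvPowerSeries.isUnit_iff_constantCoeff.1 hu
      simp at this
  refine (ringKrullDim_le_spanFinrank_maximalIdeal _).trans ?_
  rw [hm]
  have h1 := Submodule.spanFinrank_span_le_ncard_of_finite (R := MvPowerSeries (Fin d) k)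
    (Set.finite_range (MvPowerSeries.X (σ := Fin d) (R := k)))
  have h2 : (Set.range (MvPowerSeries.X (σ := Fin d) (R := k))).ncard ≤ d := by
    rw [← Set.image_univ]
    refine (Set.ncard_image_le Set.finite_univ).trans ?_
    simp [Set.ncard_univ]
  exact_mod_cast h1.trans h2

/-- Cohen's structure theorem in characteristic `p`: `R` is finite over a power series ring over its
residue field, with the variables mapping to the given system of parameters. -/
theorem exists_finite_injective_hom (R : Type) [CommRing R] [IsLocalRing R] [IsNoetherianRing R]
    [IsAdicComplete (IsLocalRing.maximalIdeal R) R]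
    (p : ℕ) [Fact p.Prime] [CharP R p]
    (d : ℕ) (hd : ringKrullDim R = d)
    (x : Fin d → R) (hx : (Ideal.span (Set.range x)).radical = IsLocalRing.maximalIdeal R) :
    ∃ Φ : MvPowerSeries (Fin d) (IsLocalRing.ResidueField R) →+* R,
      Function.Injective Φ ∧ Φ.Finite ∧ ∀ i, Φ (MvPowerSeries.X i) = x i := by
  obtain ⟨s, hs⟩ := exists_coefficient_field R p
  have hxm : Ideal.span (Set.range x) ≤ IsLocalRing.maximalIdeal R := hx ▸ Ideal.le_radical
  obtain ⟨Φ, hX, hC⟩ := exists_hom_mvPowerSeries (IsLocalRing.maximalIdeal R) s x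
    fun i => hxm (Ideal.subset_span ⟨i, rfl⟩)
  let _ : Algebra (MvPowerSeries (Fin d) (IsLocalRing.ResidueField R)) R := Φ.toAlgebra
  have halg : algebraMap (MvPowerSeries (Fin d) (IsLocalRing.ResidueField R)) R = Φ := rfl
  let J : Ideal (MvPowerSeries (Fin d) (IsLocalRing.ResidueField R)) :=
    Ideal.span (Set.range MvPowerSeries.X)
  have hJ : J.map (algebraMap _ R) = Ideal.span (Set.range x) := by
    rw [Ideal.map_span, ← Set.range_comp]
    congr 2
    exact funext hX
  have hHaus : IsHausdorff J R := by
    rw [← IsHausdorff.map_algebraMap_iff (S := R), hJ]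
    refine IsHausdorff.of_isLocalRing _ _ fun htop => ?_
    rw [htop, top_le_iff] at hxm
    exact Ideal.IsPrime.ne_top' hxm
  have hfin : Module.Finite (MvPowerSeries (Fin d) (IsLocalRing.ResidueField R)) R := by
    obtain ⟨N, hN⟩ := Ideal.exists_radical_pow_le_of_fg (Ideal.span (Set.range x))
      (IsNoetherian.noetherian _)
    rw [hx] at hN
    obtain ⟨S, hS, hr⟩ := exists_fg_sub_mem_pow
      (A := MvPowerSeries (Fin d) (IsLocalRing.ResidueField R)) (R := R) (fun r => by
        refine ⟨MvPowerSeries.C (IsLocalRing.residue R r), ?_⟩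
        rw [halg, hC, ← IsLocalRing.residue_eq_zero_iff, map_sub, hs, sub_self]) N
    refine finite_of_isPrecomplete J S hS fun r => ?_
    obtain ⟨y, hy, hry⟩ := hr r
    refine ⟨y, hy, ?_⟩
    rw [Ideal.smul_top_eq_map, hJ]
    exact hN hry
  have : IsDomain (MvPowerSeries (Fin d) (IsLocalRing.ResidueField R)) :=
    NoZeroDivisors.to_isDomain _
  exact ⟨Φ, algebraMap_injective_of_ringKrullDim (ringKrullDim_mvPowerSeries_le _ _) hd.ge,
    hfin, hX⟩

/-! ### The tight closure of a parameter ideal -/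

theorem bracketPow_span_range {R : Type} [CommRing R] (p : ℕ) [Fact p.Prime] [CharP R p] {d : ℕ}
    (x : Fin d → R) (e : ℕ) :
    bracketPow (Ideal.span (Set.range x)) (p ^ e) = Ideal.span (Set.range fun i => x i ^ p ^ e) := by
  have : ExpChar R p := ExpChar.prime Fact.out
  apply le_antisymm
  · rw [bracketPow, Ideal.span_le]
    rintro _ ⟨a, ha, rfl⟩
    obtain ⟨c, rfl⟩ := (Submodule.mem_span_range_iff_exists_fun _).1 ha
    simp only [smul_eq_mul]
    rw [sum_pow_char_pow p e]
    refine sum_mem fun i _ => ?_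
    rw [mul_pow]
    exact Ideal.mul_mem_left _ _ (Ideal.subset_span ⟨i, rfl⟩)
  · rw [Ideal.span_le]
    rintro _ ⟨i, rfl⟩
    exact Ideal.subset_span ⟨x i, Ideal.subset_span ⟨i, rfl⟩, rfl⟩

/-- The tight closure condition holds for all `e`, not only for large ones, after multiplying `c` by
a power of a nonzero `x i`. If all `x i` vanish, then `f = 0`. -/
theorem exists_forall_of_mem_tightClosure {R : Type} [CommRing R] [IsDomain R] (p : ℕ)
    [Fact p.Prime] [CharP R p] {d : ℕ} (x : Fin d → R) {f : R}
    (hf : f ∈ tightClosure p (Ideal.span (Set.range x))) :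
    ∃ c : R, c ≠ 0 ∧ ∀ e, c * f ^ p ^ e ∈ Ideal.span (Set.range fun i => x i ^ p ^ e) := by
  have hp : p.Prime := Fact.out
  obtain ⟨c, hc, e₀, h⟩ := hf
  simp only [bracketPow_span_range] at h
  by_cases hx : ∀ i, x i = 0
  · refine ⟨1, one_ne_zero, fun e => ?_⟩
    have h1 := h e₀ le_rfl
    have h2 : (Set.range fun i => x i ^ p ^ e₀) ⊆ {0} := by
      rintro _ ⟨i, rfl⟩
      simp [hx i, hp.ne_zero]
    have h3 := Ideal.span_mono h2 h1
    rw [Ideal.mem_span_singleton, zero_dvd_iff] at h3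
    have h4 : f = 0 := by simpa [hc, hp.ne_zero] using h3
    rw [h4, zero_pow (pow_ne_zero _ hp.ne_zero), mul_zero]
    exact Ideal.zero_mem _
  · push Not at hx
    obtain ⟨i, hi⟩ := hx
    refine ⟨c * x i ^ p ^ e₀, mul_ne_zero hc (pow_ne_zero _ hi), fun e => ?_⟩
    rcases le_total e₀ e with he | he
    · rw [mul_right_comm]
      exact Ideal.mul_mem_right _ _ (h e he)
    · rw [mul_right_comm]
      refine Ideal.mul_mem_left _ _ ?_
      rw [← Nat.sub_add_cancel (Nat.pow_le_pow_right hp.pos he), pow_add]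
      exact Ideal.mul_mem_left _ _ (Ideal.subset_span ⟨i, rfl⟩)

/-- **Smith.** Let `(R, m)` be a complete Noetherian local domain of Krull
dimension `d` and characteristic `p > 0`, and let `x_1,…,x_d` be a system of parameters.
Then the tight closure of the parameter ideal equals its plus closure. -/
theorem statement11 (R : Type) [CommRing R] [IsLocalRing R] [IsNoetherianRing R] [IsDomain R]
    [IsAdicComplete (IsLocalRing.maximalIdeal R) R]
    (p : ℕ) [Fact p.Prime] [CharP R p]
    (d : ℕ) (hd : ringKrullDim R = d)
    (x : Fin d → R) (hx : (Ideal.span (Set.range x)).radical = IsLocalRing.maximalIdeal R) :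
    tightClosure p (Ideal.span (Set.range x)) = plusClosure R (Ideal.span (Set.range x)) := by
  refine Set.Subset.antisymm (fun f hf => ?_) (plusClosure_subset_tightClosure R p _)
  obtain ⟨c, hc, h⟩ := exists_forall_of_mem_tightClosure p x hf
  obtain ⟨Φ, hinj, hfin, hX⟩ := exists_finite_injective_hom R p d hd x hx
  let _ : Algebra (MvPowerSeries (Fin d) (IsLocalRing.ResidueField R)) R := Φ.toAlgebra
  have : Module.Finite (MvPowerSeries (Fin d) (IsLocalRing.ResidueField R)) R := hfin
  have : IsDomain (MvPowerSeries (Fin d) (IsLocalRing.ResidueField R)) :=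
    NoZeroDivisors.to_isDomain _
  have : CharP (IsLocalRing.ResidueField R) p :=
    (CharP.charP_iff_prime_eq_zero Fact.out).2 (by
      rw [← map_natCast (IsLocalRing.residue R), CharP.cast_eq_zero, map_zero])
  have hx' : x = fun i => algebraMap (MvPowerSeries (Fin d) (IsLocalRing.ResidueField R)) R
      (MvPowerSeries.X i) := funext fun i => (hX i).symm
  rw [hx'] at h ⊢
  exact mem_plusClosure_of_hasCartierMaps hinj p
    (hasCartierMaps_mvPowerSeries p d (IsLocalRing.ResidueField R)) _ f c hc h
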